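/- arXiv:1801.00204 — 4 statements merged into one kernel-verified Lean document; each statement's English description precedes it below -/
import Mathlib

section
/- Let c ∈ ℝ with -1 < c ≤ -3/4. If z ∈ Y, then fⁿ(z) → (a₁,a₁) as n → +∞. -/
open Set Filter Topology

/-- The map `f(x,y) = (xy + c, x)`. -/
noncomputable def fc (c : ℝ) : ℝ × ℝ → ℝ × ℝ := fun z => (z.1 * z.2 + c, z.1)

/-- `a₁ = (1 - √(1-4c))/2`. -/
noncomputable def a1 (c : ℝ) : ℝ := (1 - Real.sqrt (1 - 4 * c)) / 2

/-- `a₂ = (1 + √(1-4c))/2`. -/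
noncomputable def a2 (c : ℝ) : ℝ := (1 + Real.sqrt (1 - 4 * c)) / 2

/-!
The first coordinates of an orbit satisfy `x (n + 2) = x (n + 1) * x n + c`, hence also the
third-order recurrence `x (n + 3) = x (n + 1) ^ 2 * x n + c * x (n + 1) + c`. Let `m ≤ M` be the
least and the greatest cluster point of `x`. Passing to the limit, `M = t ^ 2 * s + c * t + c` with
`s, t ∈ [m, M]`. Replacing `s` by `M` and cancelling `1 + t > 0` gives `M * (1 - t) ≤ c`, and then
`M * (1 - m) ≤ c` because `M ≤ 0`. Symmetrically `c ≤ m * (1 - M)`. Together, `M ≤ m`.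
-/

section ClusterPoints

variable {α : Type*}

lemma exists_mapClusterPt_eq_of_mapClusterPt_comp {ι X Y : Type*} [TopologicalSpace X]
    [TopologicalSpace Y] [T2Space Y] {F : Filter ι} {K : Set X} (hK : IsCompact K) {v : ι → X}
    (hv : ∀ᶠ i in F, v i ∈ K) {g : X → Y} (hg : Continuous g) {w : Y}
    (hw : MapClusterPt w F (g ∘ v)) : ∃ p, MapClusterPt p F v ∧ g p = w := by
  obtain ⟨U, hUF, hUw⟩ := mapClusterPt_iff_ultrafilter.1 hw
  obtain ⟨p, -, hp⟩ := hK.ultrafilter_le_nhds (U.map v) (tendsto_principal.2 (hUF hv))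
  exact ⟨p, mapClusterPt_iff_ultrafilter.2 ⟨U, hUF, hp⟩,
    tendsto_nhds_unique ((hg.tendsto p).comp hp) hUw⟩

lemma mapClusterPt_atTop_add_iff [TopologicalSpace α] {u : ℕ → α} {x : α} (k : ℕ) :
    MapClusterPt x atTop (fun n => u (n + k)) ↔ MapClusterPt x atTop u := by
  rw [← Function.comp_def u, mapClusterPt_comp, map_add_atTop_eq_nat]

lemma exists_forall_mapClusterPt_of_recurrence [TopologicalSpace α] [T2Space α] {K : Set α}
    (hK : IsCompact K) {k : ℕ} {g : (Fin k → α) → α} (hg : Continuous g) {u : ℕ → α}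
    (hu : ∀ n, u n ∈ K) (hrec : ∀ n, u (n + k) = g fun i => u (n + i)) {w : α}
    (hw : MapClusterPt w atTop u) :
    ∃ p : Fin k → α, (∀ i, MapClusterPt (p i) atTop u) ∧ g p = w := by
  have hw_shift : MapClusterPt w atTop (g ∘ fun n (i : Fin k) => u (n + i)) := by
    simpa only [Function.comp_def, ← hrec] using (mapClusterPt_atTop_add_iff k).2 hw
  obtain ⟨p, hp, hgp⟩ := exists_mapClusterPt_eq_of_mapClusterPt_comp
    (isCompact_univ_pi fun _ => hK) (.of_forall fun n (i : Fin k) _ => hu (n + i)) hg hw_shift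
  exact ⟨p, fun i => (mapClusterPt_atTop_add_iff (i : ℕ)).1
    (hp.continuousAt_comp (continuous_apply i).continuousAt), hgp⟩

variable [LinearOrder α] [TopologicalSpace α] [OrderTopology α] [CompactIccSpace α]

lemma exists_isLeast_isGreatest_mapClusterPt {a b : α} {u : ℕ → α} (hu : ∀ n, u n ∈ Icc a b) :
    ∃ m M, IsLeast {x | MapClusterPt x atTop u} m ∧ IsGreatest {x | MapClusterPt x atTop u} M := by
  have hsub : {x | MapClusterPt x atTop u} ⊆ Icc a b := fun x hx =>
    isClosed_Icc.mem_of_mapClusterPt hx (.of_forall hu)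
  have hcompact : IsCompact {x | MapClusterPt x atTop u} :=
    isCompact_Icc.of_isClosed_subset isClosed_setOfPred_clusterPt hsub
  have hne : {x | MapClusterPt x atTop u}.Nonempty := by
    obtain ⟨x, -, hx⟩ := isCompact_Icc.exists_mapClusterPt (f := atTop)
      (tendsto_principal.2 (.of_forall hu))
    exact ⟨x, hx⟩
  obtain ⟨m, hm⟩ := hcompact.exists_isLeast hne
  obtain ⟨M, hM⟩ := hcompact.exists_isGreatest hne
  exact ⟨m, M, hm, hM⟩

theorem exists_tendsto_of_recurrence_of_endpoints_eq {a b : α} {k : ℕ}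
    {g : (Fin k → α) → α} (hg : Continuous g)
    (hendpoints : ∀ m ∈ Icc a b, ∀ M ∈ Icc a b, ∀ p q : Fin k → α,
      (∀ i, p i ∈ Icc m M) → (∀ i, q i ∈ Icc m M) → g p = m → g q = M → m = M)
    {u : ℕ → α} (hu : ∀ n, u n ∈ Icc a b) (hrec : ∀ n, u (n + k) = g fun i => u (n + i)) :
    ∃ l ∈ Icc a b, Tendsto u atTop (𝓝 l) := by
  obtain ⟨m, M, hm, hM⟩ := exists_isLeast_isGreatest_mapClusterPt hu
  have hmem {x : α} (hx : MapClusterPt x atTop u) : x ∈ Icc a b :=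
    isClosed_Icc.mem_of_mapClusterPt hx (.of_forall hu)
  obtain ⟨p, hp, hgp⟩ := exists_forall_mapClusterPt_of_recurrence isCompact_Icc hg hu hrec hm.1
  obtain ⟨q, hq, hgq⟩ := exists_forall_mapClusterPt_of_recurrence isCompact_Icc hg hu hrec hM.1
  have hmM : m = M := hendpoints m (hmem hm.1) M (hmem hM.1) p q
    (fun i => ⟨hm.2 (hp i), hM.2 (hp i)⟩) (fun i => ⟨hm.2 (hq i), hM.2 (hq i)⟩) hgp hgq
  refine ⟨m, hmem hm.1, isCompact_Icc.tendsto_nhds_of_unique_mapClusterPt (.of_forall hu) ?_⟩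
  exact fun x _ hx => le_antisymm (hmM ▸ hM.2 hx) (hm.2 hx)

end ClusterPoints

section Recurrence

variable {c : ℝ}

lemma mul_one_sub_le_of_le_cubic {m M s t : ℝ} (hM : M ≤ 0) (ht : -1 < t) (hmt : m ≤ t)
    (hsM : s ≤ M) (h : M ≤ t ^ 2 * s + c * t + c) : M * (1 - m) ≤ c := by
  have hcancel : (1 + t) * (M * (1 - t)) ≤ (1 + t) * c := by
    linarith [mul_le_mul_of_nonneg_left hsM (sq_nonneg t)]
  calc M * (1 - m) ≤ M * (1 - t) := mul_le_mul_of_nonpos_left (by linarith) hM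
    _ ≤ c := le_of_mul_le_mul_left hcancel (by linarith)

lemma le_mul_one_sub_of_cubic_le {m M s t : ℝ} (hm : m ≤ 0) (ht : -1 < t) (htM : t ≤ M)
    (hms : m ≤ s) (h : t ^ 2 * s + c * t + c ≤ m) : c ≤ m * (1 - M) := by
  have hcancel : (1 + t) * c ≤ (1 + t) * (m * (1 - t)) := by
    linarith [mul_le_mul_of_nonneg_left hms (sq_nonneg t)]
  calc c ≤ m * (1 - t) := le_of_mul_le_mul_left hcancel (by linarith)
    _ ≤ m * (1 - M) := mul_le_mul_of_nonpos_left (by linarith) hm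

lemma eq_a1_of_eq_mul_self_add {x : ℝ} (hx : x ≤ 1 / 2) (hfix : x = x * x + c) : x = a1 c := by
  have hsqrt : √(1 - 4 * c) = 1 - 2 * x := by
    rw [show 1 - 4 * c = (1 - 2 * x) ^ 2 by linarith, Real.sqrt_sq (by linarith)]
  rw [a1, hsqrt]
  ring

theorem tendsto_a1_of_recurrence (hc : -1 < c) {x : ℕ → ℝ} (hx : ∀ n, x n ∈ Icc c 0)
    (hrec : ∀ n, x (n + 2) = x (n + 1) * x n + c) : Tendsto x atTop (𝓝 (a1 c)) := by
  let g : (Fin 3 → ℝ) → ℝ := fun p => p 1 ^ 2 * p 0 + c * p 1 + c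
  have hg : Continuous g := by fun_prop
  have hrec_cubic (n : ℕ) : x (n + 3) = g fun i => x (n + i) := by
    calc x (n + 3) = (x (n + 1) * x n + c) * x (n + 1) + c := by rw [hrec (n + 1), hrec n]
      _ = x (n + 1) ^ 2 * x n + c * x (n + 1) + c := by ring
  obtain ⟨l, hl, hlim⟩ : ∃ l ∈ Icc c 0, Tendsto x atTop (𝓝 l) := by
    refine exists_tendsto_of_recurrence_of_endpoints_eq hg ?_ hx hrec_cubic
    intro m hm M hM p q hp hq hgp hgq
    have hupper : M * (1 - m) ≤ c := mul_one_sub_le_of_le_cubic hM.2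
      (hc.trans_le (hm.1.trans (hq 1).1)) (hq 1).1 (hq 0).2 hgq.ge
    have hlower : c ≤ m * (1 - M) := le_mul_one_sub_of_cubic_le hm.2
      (hc.trans_le (hm.1.trans (hp 1).1)) (hp 1).2 (hp 0).1 hgp.le
    exact le_antisymm ((hp 0).1.trans (hp 0).2) (by linarith)
  have hfix : l = l * l + c := by
    refine tendsto_nhds_unique (hlim.comp (tendsto_add_atTop_nat 2)) ?_
    simpa only [Function.comp_def, hrec] using
      ((hlim.comp (tendsto_add_atTop_nat 1)).mul hlim).add_const c
  rwa [← eq_a1_of_eq_mul_self_add (hl.2.trans (by norm_num)) hfix]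

end Recurrence

lemma mapsTo_fc_Icc_prod_Icc {c : ℝ} (hc : -1 ≤ c) :
    MapsTo (fc c) (Icc c 0 ×ˢ Icc c 0) (Icc c 0 ×ˢ Icc c 0) := by
  rintro ⟨x, y⟩ ⟨hx, hy⟩
  have hxy_nonneg : 0 ≤ x * y := mul_nonneg_of_nonpos_of_nonpos hx.2 hy.2
  have hxy_le : x * y ≤ -c := by
    calc x * y ≤ x * c := mul_le_mul_of_nonpos_left hy.1 hx.2
      _ ≤ -1 * c := mul_le_mul_of_nonpos_right (hc.trans hx.1) (hy.1.trans hy.2)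
      _ = -c := by ring
  exact ⟨⟨le_add_of_nonneg_left hxy_nonneg, le_neg_iff_add_nonpos_right.1 hxy_le⟩, hx⟩

lemma snd_iterate_fc_succ (c : ℝ) (z : ℝ × ℝ) (n : ℕ) :
    ((fc c)^[n + 1] z).2 = ((fc c)^[n] z).1 := by
  rw [Function.iterate_succ_apply', fc]

lemma fst_iterate_fc_add_two (c : ℝ) (z : ℝ × ℝ) (n : ℕ) :
    ((fc c)^[n + 2] z).1 = ((fc c)^[n + 1] z).1 * ((fc c)^[n] z).1 + c := by
  rw [Function.iterate_succ_apply', fc, snd_iterate_fc_succ]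

theorem stmt11_general (c : ℝ) (hc : -1 < c) (z : ℝ × ℝ) (hz : z ∈ Icc c 0 ×ˢ Icc c 0) :
    Tendsto (fun n => (fc c)^[n] z) atTop (𝓝 (a1 c, a1 c)) := by
  have hmem (n : ℕ) : (fc c)^[n] z ∈ Icc c 0 ×ˢ Icc c 0 :=
    (mapsTo_fc_Icc_prod_Icc hc.le).iterate n hz
  have hfst : Tendsto (fun n => ((fc c)^[n] z).1) atTop (𝓝 (a1 c)) :=
    tendsto_a1_of_recurrence hc (fun n => (hmem n).1) (fst_iterate_fc_add_two c z)
  have hsnd : Tendsto (fun n => ((fc c)^[n] z).2) atTop (𝓝 (a1 c)) := by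
    rw [← tendsto_add_atTop_iff_nat 1]
    simpa only [snd_iterate_fc_succ] using hfst
  exact hfst.prodMk_nhds hsnd

theorem stmt11 (c : ℝ) (hc1 : -1 < c) (hc2 : c ≤ -3/4) (z : ℝ × ℝ)
    (hz : z ∈ Icc c 0 ×ˢ Icc c 0) :
    Tendsto (fun n => (fc c)^[n] z) atTop (𝓝 (a1 c, a1 c)) :=
  stmt11_general c hc1 z hz
end

section
/- Let c ∈ ℝ with -1 < c < 0. Then: (1) f(A) ⊆ B ∪ R₀ ∪ R₁ ∪ H₁ ∪ H₂; (2) f(B) ⊆ D ∪ R₂; (3) f(C) ⊆ N ∪ E; (4) f(D) ⊆ E ∪ F ∪ P; (5) f(E) ⊆ R₂ ∪ R₃ ∪ G; (6) f(F) ⊆ R₁ ∪ C; (7) f(G) ⊆ M ∪ B; (8) f(H₁) ⊆ B ∪ R₀ ∪ H₁; (9) f(H₂) ⊆ B ∪ A ∪ L. -/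
open Set Filter Topology

/-! The second coordinate of `f(x, y)` is `x`, so `f(S × T) ⊆ U × S` as soon as `xy + c ∈ U` on
`S × T`. On each region `xy` has a constant sign: if `xy ≤ 0` then `xy + c ≤ c ≤ 0`, and if
`xy ≥ 0` then `xy + c ≥ c ≥ -1`. It remains to cut the half-line `(-∞, 0]` or
`[-1, ∞)` at the endpoints of the regions. Only `H₁` needs an upper bound as well, namely
`xy + c ≤ a₂² + c = a₂`. -/

section IntervalProd

variable {α β : Type*} [LinearOrder α] {a b d e : α}

theorem Iic_prod_eq_union (hab : a ≤ b) (S : Set β) :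
    Iic b ×ˢ S = Iic a ×ˢ S ∪ Icc a b ×ˢ S := by
  rw [← union_prod, Iic_union_Icc_eq_Iic hab]

theorem Ici_prod_eq_union (hab : a ≤ b) (hbd : b ≤ d) (S : Set β) :
    Ici a ×ˢ S = Icc a b ×ˢ S ∪ Icc b d ×ˢ S ∪ Ici d ×ˢ S := by
  rw [← union_prod, ← union_prod, Icc_union_Icc_eq_Icc hab hbd,
    Icc_union_Ici_eq_Ici (hab.trans hbd)]

theorem Icc_prod_eq_union (hab : a ≤ b) (hbd : b ≤ d) (hde : d ≤ e) (S : Set β) :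
    Icc a e ×ˢ S = Icc a b ×ˢ S ∪ Icc b d ×ˢ S ∪ Icc d e ×ˢ S := by
  rw [← union_prod, ← union_prod, Icc_union_Icc_eq_Icc hab hbd,
    Icc_union_Icc_eq_Icc (hab.trans hbd) hde]

end IntervalProd

theorem a2_mul_self_add {c : ℝ} (hc : c ≤ 1 / 4) : a2 c * a2 c + c = a2 c := by
  have sq_sqrt_disc : √(1 - 4 * c) ^ 2 = 1 - 4 * c := Real.sq_sqrt (by linarith)
  unfold a2
  linarith

theorem one_le_a2 {c : ℝ} (hc : c ≤ 0) : 1 ≤ a2 c := by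
  have one_le_sqrt_disc : 1 ≤ √(1 - 4 * c) := Real.one_le_sqrt.2 (by linarith)
  unfold a2
  linarith

section Image

variable {c a : ℝ} {S T U : Set ℝ}

theorem fc_image_prod_subset (h : ∀ x ∈ S, ∀ y ∈ T, x * y + c ∈ U) :
    fc c '' (S ×ˢ T) ⊆ U ×ˢ S := by
  rintro _ ⟨⟨x, y⟩, ⟨hx, hy⟩, rfl⟩
  exact ⟨h x hx y hy, hx⟩

theorem fc_image_prod_subset_of_mul_nonpos (hc : c ≤ 0) (h : ∀ x ∈ S, ∀ y ∈ T, x * y ≤ 0) :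
    fc c '' (S ×ˢ T) ⊆ Iic (-1) ×ˢ S ∪ Icc (-1) 0 ×ˢ S := by
  rw [← Iic_prod_eq_union (by norm_num)]
  exact fc_image_prod_subset fun x hx y hy => add_nonpos (h x hx y hy) hc

theorem fc_image_prod_subset_of_mul_nonneg (hc : -1 ≤ c) (ha : 0 ≤ a)
    (h : ∀ x ∈ S, ∀ y ∈ T, 0 ≤ x * y) :
    fc c '' (S ×ˢ T) ⊆ Icc (-1) 0 ×ˢ S ∪ Icc 0 a ×ˢ S ∪ Ici a ×ˢ S := by
  rw [← Ici_prod_eq_union (by norm_num) ha]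
  exact fc_image_prod_subset fun x hx y hy => hc.trans (le_add_of_nonneg_left (h x hx y hy))

theorem fc_image_Icc_prod_Ici_subset (hc : -1 ≤ c) (ha : 1 + c ≤ a) :
    fc c '' (Icc 0 a ×ˢ Ici a) ⊆
      Icc (-1) 0 ×ˢ Ici (1 + c) ∪ Icc 0 (1 + c) ×ˢ Icc 0 a ∪ Icc (-1) 0 ×ˢ Icc 0 (1 + c) ∪
        Icc (1 + c) a ×ˢ Icc 0 a ∪ Ici a ×ˢ Icc 0 a := by
  have one_add_nonneg : 0 ≤ 1 + c := by linarith
  have image_subset := fc_image_prod_subset_of_mul_nonneg (S := Icc 0 a) (T := Ici a) hc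
    one_add_nonneg fun x hx y hy => mul_nonneg hx.1 (one_add_nonneg.trans (ha.trans hy))
  have left_strip_subset :
      Icc (-1 : ℝ) 0 ×ˢ Icc 0 a ⊆ Icc (-1) 0 ×ˢ Icc 0 (1 + c) ∪ Icc (-1) 0 ×ˢ Ici (1 + c) := by
    rw [← prod_union, Icc_union_Ici_eq_Ici one_add_nonneg]
    exact prod_mono_right Icc_subset_Ici_self
  have right_strip_eq :
      Ici (1 + c) ×ˢ Icc 0 a = Icc (1 + c) a ×ˢ Icc 0 a ∪ Ici a ×ˢ Icc 0 a := by
    rw [← union_prod, Icc_union_Ici_eq_Ici ha]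
  rw [right_strip_eq] at image_subset
  refine image_subset.trans ?_
  grind

theorem fc_image_Icc_prod_Icc_subset (hc : -1 ≤ c) (ha : 1 + c ≤ a) (hsq : a * a + c ≤ a) :
    fc c '' (Icc (1 + c) a ×ˢ Icc 0 a) ⊆
      Icc (-1) 0 ×ˢ Ici (1 + c) ∪ Icc 0 (1 + c) ×ˢ Icc 0 a ∪ Icc (1 + c) a ×ˢ Icc 0 a := by
  have one_add_nonneg : 0 ≤ 1 + c := by linarith
  have image_subset : fc c '' (Icc (1 + c) a ×ˢ Icc 0 a) ⊆ Icc (-1) a ×ˢ Icc (1 + c) a := by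
    refine fc_image_prod_subset fun x hx y hy => ⟨?_, ?_⟩
    · exact hc.trans (le_add_of_nonneg_left (mul_nonneg (one_add_nonneg.trans hx.1) hy.1))
    · calc x * y + c ≤ a * a + c := by
            gcongr
            exacts [hy.1, one_add_nonneg.trans ha, hx.2, hy.2]
        _ ≤ a := hsq
  have Icc_one_add_subset : Icc (1 + c) a ⊆ Icc 0 a := Icc_subset_Icc_left one_add_nonneg
  rw [Icc_prod_eq_union neg_one_lt_zero.le one_add_nonneg ha] at image_subset
  exact image_subset.trans <| union_subset_union
    (union_subset_union (prod_mono_right Icc_subset_Ici_self) (prod_mono_right Icc_one_add_subset))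
    (prod_mono_right Icc_one_add_subset)

theorem fc_image_Ici_prod_Icc_subset (hc : -1 ≤ c) (ha : 1 + c ≤ a) :
    fc c '' (Ici a ×ˢ Icc 0 a) ⊆
      Icc (-1) 0 ×ˢ Ici (1 + c) ∪ Icc 0 a ×ˢ Ici a ∪ Ici a ×ˢ Ici a := by
  have a_nonneg : 0 ≤ a := by linarith
  have image_subset := fc_image_prod_subset_of_mul_nonneg (S := Ici a) (T := Icc 0 a) hc a_nonneg
    fun x hx y hy => mul_nonneg (a_nonneg.trans hx) hy.1
  refine image_subset.trans ?_
  gcongr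

end Image

theorem stmt12 (c : ℝ) (hc1 : -1 < c) (hc2 : c < 0) :
    fc c '' (Icc (0 : ℝ) (a2 c) ×ˢ Ici (a2 c)) ⊆
      Icc (-1 : ℝ) 0 ×ˢ Ici (1 + c) ∪ Icc (0 : ℝ) (1 + c) ×ˢ Icc (0 : ℝ) (a2 c) ∪
      Icc (-1 : ℝ) 0 ×ˢ Icc (0 : ℝ) (1 + c) ∪ Icc (1 + c) (a2 c) ×ˢ Icc (0 : ℝ) (a2 c) ∪
      Ici (a2 c) ×ˢ Icc (0 : ℝ) (a2 c) ∧
    fc c '' (Icc (-1 : ℝ) 0 ×ˢ Ici (1 + c)) ⊆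
      Iic (-1 : ℝ) ×ˢ Icc (-1 : ℝ) 0 ∪ Icc (-1 : ℝ) 0 ×ˢ Icc (-1 : ℝ) 0 ∧
    fc c '' (Iic (-1 : ℝ) ×ˢ Icc (0 : ℝ) (1 + c)) ⊆
      Iic (-1 : ℝ) ×ˢ Iic (-1 : ℝ) ∪ Icc (-1 : ℝ) 0 ×ˢ Iic (-1 : ℝ) ∧
    fc c '' (Iic (-1 : ℝ) ×ˢ Icc (-1 : ℝ) 0) ⊆
      Icc (-1 : ℝ) 0 ×ˢ Iic (-1 : ℝ) ∪ Icc (0 : ℝ) (1 + c) ×ˢ Iic (-1 : ℝ) ∪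
      Ici (1 + c) ×ˢ Iic (-1 : ℝ) ∧
    fc c '' (Icc (-1 : ℝ) 0 ×ˢ Iic (-1 : ℝ)) ⊆
      Icc (-1 : ℝ) 0 ×ˢ Icc (-1 : ℝ) 0 ∪ Icc (0 : ℝ) (1 + c) ×ˢ Icc (-1 : ℝ) 0 ∪
      Ici (1 + c) ×ˢ Icc (-1 : ℝ) 0 ∧
    fc c '' (Icc (0 : ℝ) (1 + c) ×ˢ Iic (-1 : ℝ)) ⊆
      Icc (-1 : ℝ) 0 ×ˢ Icc (0 : ℝ) (1 + c) ∪ Iic (-1 : ℝ) ×ˢ Icc (0 : ℝ) (1 + c) ∧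
    fc c '' (Ici (1 + c) ×ˢ Icc (-1 : ℝ) 0) ⊆
      Iic (-1 : ℝ) ×ˢ Ici (1 + c) ∪ Icc (-1 : ℝ) 0 ×ˢ Ici (1 + c) ∧
    fc c '' (Icc (1 + c) (a2 c) ×ˢ Icc (0 : ℝ) (a2 c)) ⊆
      Icc (-1 : ℝ) 0 ×ˢ Ici (1 + c) ∪ Icc (0 : ℝ) (1 + c) ×ˢ Icc (0 : ℝ) (a2 c) ∪
      Icc (1 + c) (a2 c) ×ˢ Icc (0 : ℝ) (a2 c) ∧
    fc c '' (Ici (a2 c) ×ˢ Icc (0 : ℝ) (a2 c)) ⊆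
      Icc (-1 : ℝ) 0 ×ˢ Ici (1 + c) ∪ Icc (0 : ℝ) (a2 c) ×ˢ Ici (a2 c) ∪
      Ici (a2 c) ×ˢ Ici (a2 c) := by
  have hc_ge : -1 ≤ c := hc1.le
  have one_add_nonneg : 0 ≤ 1 + c := by linarith
  have one_add_le_a2 : 1 + c ≤ a2 c := by linarith [one_le_a2 hc2.le]
  have nonpos_of_le_neg_one {t : ℝ} (ht : t ≤ -1) : t ≤ 0 := ht.trans (by norm_num)
  refine ⟨fc_image_Icc_prod_Ici_subset hc_ge one_add_le_a2, ?_, ?_, ?_, ?_, ?_, ?_,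
    fc_image_Icc_prod_Icc_subset hc_ge one_add_le_a2 (a2_mul_self_add (by linarith)).le,
    fc_image_Ici_prod_Icc_subset hc_ge one_add_le_a2⟩
  · exact fc_image_prod_subset_of_mul_nonpos hc2.le fun x hx y hy =>
      mul_nonpos_of_nonpos_of_nonneg hx.2 (one_add_nonneg.trans hy)
  · exact fc_image_prod_subset_of_mul_nonpos hc2.le fun x hx y hy =>
      mul_nonpos_of_nonpos_of_nonneg (nonpos_of_le_neg_one hx) hy.1
  · exact fc_image_prod_subset_of_mul_nonneg hc_ge one_add_nonneg fun x hx y hy =>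
      mul_nonneg_of_nonpos_of_nonpos (nonpos_of_le_neg_one hx) hy.2
  · exact fc_image_prod_subset_of_mul_nonneg hc_ge one_add_nonneg fun x hx y hy =>
      mul_nonneg_of_nonpos_of_nonpos hx.2 (nonpos_of_le_neg_one hy)
  · rw [union_comm]
    exact fc_image_prod_subset_of_mul_nonpos hc2.le fun x hx y hy =>
      mul_nonpos_of_nonneg_of_nonpos hx.1 (nonpos_of_le_neg_one hy)
  · exact fc_image_prod_subset_of_mul_nonpos hc2.le fun x hx y hy =>
      mul_nonpos_of_nonneg_of_nonpos (one_add_nonneg.trans hx) hy.2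
end

section
/- Let c ∈ ℝ with -1 < c < 0. If fⁿ(z) ∈ A ∪ H₂ for all n ≥ 0, then fⁿ(z) → θ as n → ∞; that is, ⋂_{n=0}^{∞} f^{-n}(A ∪ H₂) ⊆ W^s(θ). -/
open Set Filter Topology

/-!
An orbit that stays in `A ∪ H₂` alternates between `A` and `H₂`. Along every second iterate each
coordinate moves monotonically towards `a`: a step away from `a` would be reproduced by the next
iterate, which would then leave `A ∪ H₂`. Hence the iterates of `f²` starting in `A` converge, and
their limit is a fixed point of `f²` lying in `A`. Fixed points of `f²` are on the diagonal, which
meets `A` only in `(a, a)`. Continuity of `f` at `(a, a)` takes care of the odd iterates.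
-/

open Function

theorem tendsto_atTop_of_even_of_odd {α : Type*} {u : ℕ → α} {l : Filter α}
    (heven : Tendsto (fun k => u (2 * k)) atTop l)
    (hodd : Tendsto (fun k => u (2 * k + 1)) atTop l) : Tendsto u atTop l := by
  intro s hs
  obtain ⟨N, hN⟩ := mem_atTop_sets.1 (heven hs)
  obtain ⟨M, hM⟩ := mem_atTop_sets.1 (hodd hs)
  refine mem_atTop_sets.2 ⟨2 * N + 2 * M, fun n hn => ?_⟩
  obtain ⟨k, rfl | rfl⟩ := Nat.even_or_odd' n
  · exact hN k (by lia)
  · exact hM k (by lia)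

theorem tendsto_iterate_of_tendsto_iterate_two {X : Type*} [TopologicalSpace X] {f : X → X}
    {x y : X} (hy : IsFixedPt f y) (hf : ContinuousAt f y)
    (h : Tendsto (fun k => (f^[2])^[k] x) atTop (𝓝 y)) :
    Tendsto (fun n => f^[n] x) atTop (𝓝 y) := by
  have heven : Tendsto (fun k => f^[2 * k] x) atTop (𝓝 y) := by
    simpa only [iterate_mul] using h
  refine tendsto_atTop_of_even_of_odd heven ?_
  have hodd : Tendsto (fun k => f (f^[2 * k] x)) atTop (𝓝 (f y)) := hf.tendsto.comp heven
  simpa only [iterate_succ_apply', hy.eq] using hodd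

/-- The set `A = [0, a] × [a, ∞)`, for an arbitrary `a` in place of `a₂`. -/
def regionA (a : ℝ) : Set (ℝ × ℝ) := Icc 0 a ×ˢ Ici a

/-- The set `H₂ = [a, ∞) × [0, a]`, for an arbitrary `a` in place of `a₂`. -/
def regionH (a : ℝ) : Set (ℝ × ℝ) := Ici a ×ˢ Icc 0 a

section

variable {a c : ℝ} {z : ℝ × ℝ}

theorem continuous_fc (c : ℝ) : Continuous (fc c) := by
  unfold fc
  fun_prop

theorem isFixedPt_fc_diag_iff : IsFixedPt (fc c) (a, a) ↔ a * a + c = a := by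
  simp [IsFixedPt, fc]

theorem isFixedPt_fc_a2 (hc : c ≤ 1 / 4) : IsFixedPt (fc c) (a2 c, a2 c) := by
  have hsqrt : √(1 - 4 * c) * √(1 - 4 * c) = 1 - 4 * c := Real.mul_self_sqrt (by linarith)
  rw [isFixedPt_fc_diag_iff, a2]
  linarith

theorem fst_eq_snd_of_isFixedPt_fc_iterate_two (hz : IsFixedPt (fc c)^[2] z) : z.1 = z.2 := by
  have hfst : (z.1 * z.2 + c) * z.1 + c = z.1 := congrArg Prod.fst hz
  have hsnd : z.1 * z.2 + c = z.2 := congrArg Prod.snd hz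
  rw [hsnd] at hfst
  linarith

theorem eq_of_mem_regionA_of_isFixedPt_fc_iterate_two (hzA : z ∈ regionA a)
    (hz : IsFixedPt (fc c)^[2] z) : z = (a, a) := by
  obtain ⟨⟨-, hfst⟩, hsnd⟩ := hzA
  have hdiag := fst_eq_snd_of_isFixedPt_fc_iterate_two hz
  have hfst_eq : z.1 = a := hfst.antisymm (hsnd.trans_eq hdiag.symm)
  exact Prod.ext hfst_eq (hdiag.symm.trans hfst_eq)

theorem fc_mem_regionH (ha : IsFixedPt (fc c) (a, a)) (hz : z ∈ regionA a)
    (hfz : fc c z ∈ regionA a ∪ regionH a) : fc c z ∈ regionH a := by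
  refine hfz.elim (fun hfzA => ?_) id
  rw [isFixedPt_fc_diag_iff] at ha
  obtain ⟨⟨hx0, hxa⟩, hay⟩ := hz
  have hx : z.1 = a := hxa.antisymm hfzA.2
  have hmul : a * a ≤ z.1 * z.2 := mul_le_mul hx.ge hay (hx ▸ hx0) hx0
  exact ⟨show a ≤ z.1 * z.2 + c by linarith, hx0, hxa⟩

theorem fc_mem_regionA (ha : IsFixedPt (fc c) (a, a)) (hz : z ∈ regionH a)
    (hfz : fc c z ∈ regionA a ∪ regionH a) : fc c z ∈ regionA a := by
  refine hfz.elim id (fun hfzH => ?_)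
  rw [isFixedPt_fc_diag_iff] at ha
  obtain ⟨hax, hy0, hya⟩ := hz
  have hx : z.1 = a := hfzH.2.2.antisymm hax
  have ha0 : 0 ≤ a := hy0.trans hya
  have hmul : z.1 * z.2 ≤ a * a := mul_le_mul hx.le hya hy0 ha0
  exact ⟨⟨ha0.trans hfzH.1, show z.1 * z.2 + c ≤ a by linarith⟩, hax⟩

theorem snd_fc_iterate_two_le (hz : z ∈ regionA a) (hffz : (fc c)^[2] z ∈ regionA a) :
    ((fc c)^[2] z).2 ≤ z.2 := by
  by_contra! hlt
  have hle : z.2 * z.1 ≤ ((fc c)^[2] z).2 * z.1 := mul_le_mul_of_nonneg_right hlt.le hz.1.1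
  have : a < a := calc
    a ≤ z.2 := hz.2
    _ < ((fc c)^[2] z).2 := hlt
    _ = z.2 * z.1 + c := by simp [fc, mul_comm]
    _ ≤ ((fc c)^[2] z).2 * z.1 + c := by gcongr
    _ = ((fc c)^[2] z).1 := rfl
    _ ≤ a := hffz.1.2
  exact this.false

theorem le_snd_fc_iterate_two (hz : z ∈ regionH a) (hffz : (fc c)^[2] z ∈ regionH a) :
    z.2 ≤ ((fc c)^[2] z).2 := by
  by_contra! hlt
  have hx0 : 0 ≤ z.1 := (hz.2.1.trans hz.2.2).trans hz.1
  have hle : ((fc c)^[2] z).2 * z.1 ≤ z.2 * z.1 := mul_le_mul_of_nonneg_right hlt.le hx0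
  have : a < a := calc
    a ≤ ((fc c)^[2] z).1 := hffz.1
    _ = ((fc c)^[2] z).2 * z.1 + c := rfl
    _ ≤ z.2 * z.1 + c := by gcongr
    _ = ((fc c)^[2] z).2 := by simp [fc, mul_comm]
    _ < z.2 := hlt
    _ ≤ a := hz.2.2
  exact this.false

theorem le_fst_fc_iterate_two (hfz : fc c z ∈ regionH a)
    (hfffz : fc c ((fc c)^[2] z) ∈ regionH a) : z.1 ≤ ((fc c)^[2] z).1 :=
  le_snd_fc_iterate_two hfz hfffz

theorem exists_mem_regionA_tendsto_of_monotone_antitone {u : ℕ → ℝ × ℝ} (hu : ∀ n, u n ∈ regionA a)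
    (hfst : Monotone fun n => (u n).1) (hsnd : Antitone fun n => (u n).2) :
    ∃ p ∈ regionA a, Tendsto u atTop (𝓝 p) := by
  have hfst_lim := tendsto_atTop_ciSup hfst ⟨a, forall_mem_range.2 fun n => (hu n).1.2⟩
  have hsnd_lim := tendsto_atTop_ciInf hsnd ⟨a, forall_mem_range.2 fun n => (hu n).2⟩
  have hlim := hfst_lim.prodMk_nhds hsnd_lim
  have hclosed : IsClosed (regionA a) := isClosed_Icc.prod isClosed_Ici
  exact ⟨_, hclosed.mem_of_tendsto hlim (.of_forall hu), hlim⟩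

theorem fc_iterate_two_mem_regionA (ha : IsFixedPt (fc c) (a, a)) (hz : z ∈ regionA a)
    (hfz : fc c z ∈ regionA a ∪ regionH a) (hffz : (fc c)^[2] z ∈ regionA a ∪ regionH a) :
    (fc c)^[2] z ∈ regionA a :=
  fc_mem_regionA ha (fc_mem_regionH ha hz hfz) hffz

theorem fc_iterate_two_iterate_mem_regionA (ha : IsFixedPt (fc c) (a, a))
    (horbit : ∀ n, (fc c)^[n] z ∈ regionA a ∪ regionH a) (hz : z ∈ regionA a) (k : ℕ) :
    ((fc c)^[2])^[k] z ∈ regionA a := by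
  induction k with
  | zero => exact hz
  | succ k ih =>
    rw [iterate_succ_apply']
    apply fc_iterate_two_mem_regionA ha ih
    · simpa only [iterate_succ_apply', iterate_mul] using horbit (2 * k + 1)
    · simpa only [iterate_succ_apply', iterate_mul] using horbit (2 * (k + 1))

theorem fc_fc_iterate_two_iterate_mem_regionH (ha : IsFixedPt (fc c) (a, a))
    (horbit : ∀ n, (fc c)^[n] z ∈ regionA a ∪ regionH a) (hz : z ∈ regionA a) (k : ℕ) :
    fc c (((fc c)^[2])^[k] z) ∈ regionH a := by
  refine fc_mem_regionH ha (fc_iterate_two_iterate_mem_regionA ha horbit hz k) ?_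
  simpa only [iterate_succ_apply', iterate_mul] using horbit (2 * k + 1)

theorem tendsto_fc_iterate_of_mem_regionA (ha : IsFixedPt (fc c) (a, a))
    (horbit : ∀ n, (fc c)^[n] z ∈ regionA a ∪ regionH a) (hz : z ∈ regionA a) :
    Tendsto (fun n => (fc c)^[n] z) atTop (𝓝 (a, a)) := by
  have hA := fc_iterate_two_iterate_mem_regionA ha horbit hz
  have hH := fc_fc_iterate_two_iterate_mem_regionH ha horbit hz
  have hstep (k : ℕ) : ((fc c)^[2])^[k + 1] z = (fc c)^[2] (((fc c)^[2])^[k] z) :=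
    iterate_succ_apply' _ k z
  have hfst : Monotone fun k => (((fc c)^[2])^[k] z).1 := monotone_nat_of_le_succ fun k => by
    rw [hstep]
    exact le_fst_fc_iterate_two (hH k) (hstep k ▸ hH (k + 1))
  have hsnd : Antitone fun k => (((fc c)^[2])^[k] z).2 := antitone_nat_of_succ_le fun k => by
    rw [hstep]
    exact snd_fc_iterate_two_le (hA k) (hstep k ▸ hA (k + 1))
  obtain ⟨p, hpA, hp⟩ := exists_mem_regionA_tendsto_of_monotone_antitone hA hfst hsnd
  have hp_fixed : IsFixedPt (fc c)^[2] p :=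
    isFixedPt_of_tendsto_iterate hp ((continuous_fc c).iterate 2).continuousAt
  obtain rfl := eq_of_mem_regionA_of_isFixedPt_fc_iterate_two hpA hp_fixed
  exact tendsto_iterate_of_tendsto_iterate_two ha (continuous_fc c).continuousAt hp

theorem tendsto_fc_iterate_of_mem_regionH (ha : IsFixedPt (fc c) (a, a))
    (horbit : ∀ n, (fc c)^[n] z ∈ regionA a ∪ regionH a) (hz : z ∈ regionH a) :
    Tendsto (fun n => (fc c)^[n] z) atTop (𝓝 (a, a)) :=
  (tendsto_add_atTop_iff_nat 1).1 <|
    tendsto_fc_iterate_of_mem_regionA ha (fun n => horbit (n + 1)) (fc_mem_regionA ha hz (horbit 1))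

end

theorem stmt13_general (c a : ℝ) (ha : IsFixedPt (fc c) (a, a)) :
    (⋂ n : ℕ, (fc c)^[n] ⁻¹' (Icc (0 : ℝ) a ×ˢ Ici a ∪ Ici a ×ˢ Icc (0 : ℝ) a)) ⊆
      {z : ℝ × ℝ | Tendsto (fun n => (fc c)^[n] z) atTop (𝓝 (a, a))} := by
  intro z hz
  have horbit : ∀ n, (fc c)^[n] z ∈ regionA a ∪ regionH a := mem_iInter.1 hz
  exact (horbit 0).elim (tendsto_fc_iterate_of_mem_regionA ha horbit)
    (tendsto_fc_iterate_of_mem_regionH ha horbit)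

theorem stmt13 (c : ℝ) (hc1 : -1 < c) (hc2 : c < 0) :
    (⋂ n : ℕ, (fc c)^[n] ⁻¹'
        (Icc (0 : ℝ) (a2 c) ×ˢ Ici (a2 c) ∪ Ici (a2 c) ×ˢ Icc (0 : ℝ) (a2 c))) ⊆
      {z : ℝ × ℝ | Tendsto (fun n => (fc c)^[n] z) atTop (𝓝 (a2 c, a2 c))} :=
  stmt13_general c (a2 c) (isFixedPt_fc_a2 (by linarith))
end

section
/- Let c ∈ ℝ with -1 < c < 0. If z ∈ Y \ {α}, then z has no backward orbit entirely contained in Y; that is, for every backward orbit (wₙ)_{n≥0} of z there exists N ∈ ℕ such that w_N ∉ Y. -/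
open Set Filter Topology

/-- `w` is a backward orbit of `z` under `fc c`: `w 0 = z` and `f(w (n+1)) = w n`. -/
def IsBackwardOrbit (c : ℝ) (z : ℝ × ℝ) (w : ℕ → ℝ × ℝ) : Prop :=
  w 0 = z ∧ ∀ n : ℕ, fc c (w (n + 1)) = w n

/-!
The first coordinates of a backward orbit satisfy `xₙ = xₙ₊₁ xₙ₊₂ + c`. Put `dₙ = xₙ - xₙ₊₁`.
Subtracting consecutive instances gives `dₙ = xₙ₊₂ (xₙ₊₁ - xₙ₊₃)`, and using this once more,
`xₙ₊₁ - xₙ₊₃ = dₙ₊₁ + dₙ₊₂ = (1 + xₙ₊₃) dₙ₊₂ + xₙ₊₃ dₙ₊₃`. In `Y` the absolute values of the last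
two coefficients add up to `1`, while `|xₙ₊₂| ≤ |c| < 1`; hence `sup |dₙ| ≤ |c| sup |dₙ|`, so the
orbit is constant, and `α` is the only fixed point in `Y`.
-/

theorem eq_zero_of_norm_le_mul_iSup_norm {ι E : Type*} [NormedAddCommGroup E] {d : ι → E} {r : ℝ}
    (hr : r < 1) (hbdd : BddAbove (range fun i => ‖d i‖))
    (hd : ∀ i, ‖d i‖ ≤ r * ⨆ j, ‖d j‖) (i : ι) : d i = 0 := by
  have : Nonempty ι := ⟨i⟩
  have hle : ‖d i‖ ≤ ⨆ j, ‖d j‖ := le_ciSup hbdd i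
  have hsup : ⨆ j, ‖d j‖ ≤ r * ⨆ j, ‖d j‖ := ciSup_le hd
  have hsup_nonpos : ⨆ j, ‖d j‖ ≤ 0 := by nlinarith
  exact norm_le_zero_iff.1 (hle.trans hsup_nonpos)

/-- The recurrence satisfied by the first coordinates of a backward orbit of `fc c`. The index runs
backward in time, so each term is determined by the two that follow it. -/
def IsProductRecurrence (c : ℝ) (x : ℕ → ℝ) : Prop :=
  ∀ n, x n = x (n + 1) * x (n + 2) + c

namespace IsProductRecurrence

variable {x : ℕ → ℝ} {c : ℝ}

theorem sub_succ_eq_mul_sub (hx : IsProductRecurrence c x) (n : ℕ) :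
    x n - x (n + 1) = x (n + 2) * (x (n + 1) - x (n + 3)) := by
  linear_combination hx n - hx (n + 1)

theorem sub_add_two_eq (hx : IsProductRecurrence c x) (n : ℕ) :
    x n - x (n + 2) =
      (1 + x (n + 2)) * (x (n + 1) - x (n + 2)) + x (n + 2) * (x (n + 2) - x (n + 3)) := by
  linear_combination hx.sub_succ_eq_mul_sub n

theorem abs_sub_add_two_le (hx : IsProductRecurrence c x) {n : ℕ} {K : ℝ}
    (hn : x (n + 2) ∈ Icc (-1) 0) (hK₁ : |x (n + 1) - x (n + 2)| ≤ K)
    (hK₂ : |x (n + 2) - x (n + 3)| ≤ K) :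
    |x n - x (n + 2)| ≤ K := by
  have hcoeff : 0 ≤ 1 + x (n + 2) := by linarith [hn.1]
  calc |x n - x (n + 2)|
      ≤ |(1 + x (n + 2)) * (x (n + 1) - x (n + 2))| + |x (n + 2) * (x (n + 2) - x (n + 3))| := by
        rw [hx.sub_add_two_eq]
        exact abs_add_le _ _
    _ = (1 + x (n + 2)) * |x (n + 1) - x (n + 2)| + -x (n + 2) * |x (n + 2) - x (n + 3)| := by
        rw [abs_mul, abs_mul, abs_of_nonneg hcoeff, abs_of_nonpos hn.2]
    _ ≤ (1 + x (n + 2)) * K + -x (n + 2) * K := by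
        gcongr
        exact neg_nonneg.2 hn.2
    _ = K := by ring

theorem abs_sub_succ_le_mul (hx : IsProductRecurrence c x) {r K : ℝ} (hr : r ≤ 1)
    (hmem : ∀ n, x n ∈ Icc (-r) 0) (hK : ∀ n, |x n - x (n + 1)| ≤ K) (n : ℕ) :
    |x n - x (n + 1)| ≤ r * K := by
  have hfactor : |x (n + 2)| ≤ r := by
    rw [abs_of_nonpos (hmem _).2]
    exact neg_le.1 (hmem _).1
  have hdiff : |x (n + 1) - x (n + 3)| ≤ K :=
    hx.abs_sub_add_two_le (Icc_subset_Icc_left (neg_le_neg hr) (hmem (n + 3)))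
      (hK (n + 2)) (hK (n + 3))
  rw [hx.sub_succ_eq_mul_sub, abs_mul]
  exact mul_le_mul hfactor hdiff (abs_nonneg _) ((abs_nonneg _).trans hfactor)

theorem eq_succ (hx : IsProductRecurrence c x) {r : ℝ} (hr : r < 1)
    (hmem : ∀ n, x n ∈ Icc (-r) 0) (n : ℕ) : x n = x (n + 1) := by
  have hbdd : BddAbove (range fun n => |x n - x (n + 1)|) := by
    refine ⟨0 - -r, ?_⟩
    rintro _ ⟨k, rfl⟩
    exact abs_sub_le_of_le_of_le (hmem k).1 (hmem k).2 (hmem (k + 1)).1 (hmem (k + 1)).2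
  exact sub_eq_zero.1 <| eq_zero_of_norm_le_mul_iSup_norm (d := fun n => x n - x (n + 1)) hr hbdd
    (hx.abs_sub_succ_le_mul hr.le hmem (le_ciSup hbdd)) n

end IsProductRecurrence

theorem eq_a1_of_mul_self_add_eq {c t : ℝ} (ht : t ≤ 1 / 2) (hfix : t * t + c = t) : t = a1 c := by
  have hsq : 1 - 4 * c = (1 - 2 * t) ^ 2 := by linear_combination -4 * hfix
  have hsqrt : √(1 - 4 * c) = 1 - 2 * t := by rw [hsq, Real.sqrt_sq (by linarith)]
  rw [a1, hsqrt]
  ring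

namespace IsBackwardOrbit

variable {c : ℝ} {z : ℝ × ℝ} {w : ℕ → ℝ × ℝ}

theorem fst_succ (hw : IsBackwardOrbit c z w) (n : ℕ) : (w (n + 1)).1 = (w n).2 :=
  congrArg Prod.snd (hw.2 n)

theorem isProductRecurrence_fst (hw : IsBackwardOrbit c z w) :
    IsProductRecurrence c fun n => (w n).1 := by
  intro n
  have hfst : (w (n + 1)).1 * (w (n + 1)).2 + c = (w n).1 := congrArg Prod.fst (hw.2 n)
  rw [← hw.fst_succ] at hfst
  exact hfst.symm

theorem eq_a1_of_forall_mem (hw : IsBackwardOrbit c z w) (hc : -1 < c)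
    (hmem : ∀ n, w n ∈ Icc c 0 ×ˢ Icc c 0) : z = (a1 c, a1 c) := by
  have hconst (n : ℕ) : (w n).1 = (w (n + 1)).1 :=
    hw.isProductRecurrence_fst.eq_succ (neg_lt.1 hc) (fun n => (neg_neg c).symm ▸ (hmem n).1) n
  have hfix : (w 0).1 * (w 0).1 + c = (w 0).1 := by
    simpa only [← hconst] using (hw.isProductRecurrence_fst 0).symm
  have hfst : (w 0).1 = a1 c :=
    eq_a1_of_mul_self_add_eq ((hmem 0).1.2.trans (by norm_num)) hfix
  have hsnd : (w 0).2 = a1 c := by rw [← hw.fst_succ, ← hconst, hfst]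
  rw [← hw.1]
  exact Prod.ext hfst hsnd

end IsBackwardOrbit

theorem stmt19 (c : ℝ) (hc1 : -1 < c) (hc2 : c < 0) (z : ℝ × ℝ)
    (hz : z ∈ Icc c 0 ×ˢ Icc c 0 \ {((a1 c, a1 c) : ℝ × ℝ)})
    (w : ℕ → ℝ × ℝ) (hw : IsBackwardOrbit c z w) :
    ∃ N : ℕ, w N ∉ Icc c 0 ×ˢ Icc c 0 := by
  by_contra! hmem
  exact hz.2 (hw.eq_a1_of_forall_mem hc1 hmem)
end
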